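/- arXiv:1704.02153 — 6 statements merged into one kernel-verified Lean document; each statement's English description precedes it below -/
import Mathlib

section
/- Let A = (a_{ijk}) be a third-order n-dimensional real tensor (n ≥ 1) satisfying a_{ijk} = a_{ikj} for all i, j, k (a piezoelectric-type tensor). Then there exist a real number λ and vectors x, y ∈ ℝ^n with Σ_{j,k} a_{ijk} y_j y_k = λ x_i for all i, Σ_{j,k} a_{jki} x_j y_k = λ y_i for all i, xᵀx = 1, and yᵀy = 1; that is, A always has a C-eigenvalue with associated left and right C-eigenvectors. -/
open Finset

/-- `λ` is a C-eigenvalue of the piezoelectric-type tensor `a` with left C-eigenvector `x`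
and right C-eigenvector `y`:
`A y y = λ x`, `x A y = λ y`, `xᵀ x = 1`, `yᵀ y = 1`. -/
def CEig {n : ℕ} (a : Fin n → Fin n → Fin n → ℝ) (lam : ℝ) (x y : Fin n → ℝ) : Prop :=
  (∀ i, ∑ j, ∑ k, a i j k * y j * y k = lam * x i) ∧
  (∀ i, ∑ j, ∑ k, a j k i * x j * y k = lam * y i) ∧
  (∑ i, x i * x i = 1) ∧ (∑ i, y i * y i = 1)

/-!
Encode the tensor as a linear family `T x = ∑ i, x i • a i` of symmetric matrices and let `(x, y)`
maximize `⟪T x y, y⟫` over pairs of unit vectors. With `y` fixed the form is linear in `x`, so the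
equality case of Cauchy–Schwarz makes `x` proportional to the vector representing it; with `x` fixed
it is the Rayleigh quotient of `T x`, so `y` is an eigenvector of `T x`. Both factors of
proportionality are the maximum itself.
-/

open Metric InnerProductSpace

theorem exists_isMaxOn_sphere_prod {E F : Type*} [NormedAddCommGroup E] [NormedSpace ℝ E]
    [ProperSpace E] [Nontrivial E] [NormedAddCommGroup F] [NormedSpace ℝ F] [ProperSpace F]
    [Nontrivial F] {f : E × F → ℝ} (hf : ContinuousOn f (sphere 0 1 ×ˢ sphere 0 1)) :
    ∃ x y, ‖x‖ = 1 ∧ ‖y‖ = 1 ∧ IsMaxOn f (sphere 0 1 ×ˢ sphere 0 1) (x, y) := by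
  have hcompact : IsCompact (sphere (0 : E) 1 ×ˢ sphere (0 : F) 1) :=
    (isCompact_sphere 0 1).prod (isCompact_sphere 0 1)
  have hnonempty : (sphere (0 : E) 1 ×ˢ sphere (0 : F) 1).Nonempty :=
    (NormedSpace.sphere_nonempty.mpr zero_le_one).prod (NormedSpace.sphere_nonempty.mpr zero_le_one)
  obtain ⟨⟨x, y⟩, ⟨hx, hy⟩, hmax⟩ := hcompact.exists_isMaxOn hnonempty hf
  exact ⟨x, y, mem_sphere_zero_iff_norm.mp hx, mem_sphere_zero_iff_norm.mp hy, hmax⟩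

section CriticalPoints

variable {E F : Type*} [NormedAddCommGroup E] [InnerProductSpace ℝ E]
  [NormedAddCommGroup F] [InnerProductSpace ℝ F]

theorem eq_inner_smul_of_isMaxOn_sphere {v x : E} (hx : ‖x‖ = 1)
    (hmax : IsMaxOn (fun z ↦ ⟪v, z⟫_ℝ) (sphere 0 1) x) : v = ⟪v, x⟫_ℝ • x := by
  rcases eq_or_ne v 0 with rfl | hv
  · simp
  have norm_le : ‖v‖ ≤ ⟪v, x⟫_ℝ := by
    have h := hmax (show ‖v‖⁻¹ • v ∈ sphere 0 1 by simp [norm_smul, hv])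
    simpa [inner_smul_right, real_inner_self_eq_norm_sq, pow_two, hv] using h
  have inner_eq : ⟪v, x⟫_ℝ = ‖v‖ :=
    le_antisymm (by simpa [hx] using real_inner_le_norm v x) norm_le
  have cauchy_schwarz_eq : ⟪v, x⟫_ℝ = ‖v‖ * ‖x‖ := by rw [inner_eq, hx, mul_one]
  rw [inner_eq, ← inner_eq_norm_mul_iff_real.mp cauchy_schwarz_eq, hx, one_smul]

theorem strongDual_apply_eq_mul_inner_of_isMaxOn_sphere [CompleteSpace E]
    {f : StrongDual ℝ E} {x : E} (hx : ‖x‖ = 1) (hmax : IsMaxOn f (sphere 0 1) x) (z : E) :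
    f z = f x * ⟪x, z⟫_ℝ := by
  have inner_eq (z : E) : ⟪(toDual ℝ E).symm f, z⟫_ℝ = f z := toDual_symm_apply
  have riesz_eq : (toDual ℝ E).symm f = f x • x := by
    have h := eq_inner_smul_of_isMaxOn_sphere (v := (toDual ℝ E).symm f) hx
      (by simpa only [inner_eq])
    rwa [inner_eq] at h
  rw [← inner_eq z, riesz_eq, real_inner_smul_left]

theorem apply_eq_inner_smul_of_isMaxOn_sphere [CompleteSpace F] {S : F →L[ℝ] F}
    (hS : IsSelfAdjoint S) {y : F} (hy : ‖y‖ = 1)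
    (hmax : IsMaxOn (fun w ↦ ⟪S w, w⟫_ℝ) (sphere 0 1) y) : S y = ⟪S y, y⟫_ℝ • y := by
  have hextr : IsLocalExtrOn S.reApplyInnerSelf (sphere 0 ‖y‖) y := by
    rw [hy]
    exact Or.inr hmax.localize
  simpa [ContinuousLinearMap.rayleighQuotient, ContinuousLinearMap.reApplyInnerSelf_apply, hy]
    using hS.eq_smul_self_of_isLocalExtrOn_real hextr

/-- `c` is a C-eigenvalue of the linear family of operators `T`, with left C-eigenvector `x` and
right C-eigenvector `y`. The equation `A y y = c x` of the coordinate version is stated weakly,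
tested against every `z`: the vector `A y y` is the one representing `z ↦ ⟪T z y, y⟫`. -/
structure IsCEigentriple (T : E →L[ℝ] F →L[ℝ] F) (c : ℝ) (x : E) (y : F) : Prop where
  norm_left : ‖x‖ = 1
  norm_right : ‖y‖ = 1
  apply_eq_smul : T x y = c • y
  inner_apply_eq_mul_inner : ∀ z, ⟪T z y, y⟫_ℝ = c * ⟪x, z⟫_ℝ

theorem IsCEigentriple.of_isMaxOn [CompleteSpace E] [CompleteSpace F] {T : E →L[ℝ] F →L[ℝ] F}
    {x : E} {y : F} (hT : IsSelfAdjoint (T x)) (hx : ‖x‖ = 1) (hy : ‖y‖ = 1)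
    (hmax : IsMaxOn (fun p : E × F ↦ ⟪T p.1 p.2, p.2⟫_ℝ) (sphere 0 1 ×ˢ sphere 0 1) (x, y)) :
    IsCEigentriple T ⟪T x y, y⟫_ℝ x y where
  norm_left := hx
  norm_right := hy
  apply_eq_smul := apply_eq_inner_smul_of_isMaxOn_sphere hT hy fun w hw ↦
    hmax (a := (x, w)) (Set.mk_mem_prod (mem_sphere_zero_iff_norm.mpr hx) hw)
  inner_apply_eq_mul_inner z := by
    let f : StrongDual ℝ E := (innerSL ℝ y).comp (T.flip y)
    have f_apply (z : E) : f z = ⟪T z y, y⟫_ℝ := real_inner_comm _ _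
    have f_max : IsMaxOn f (sphere 0 1) x := fun z hz ↦ by
      simpa only [Set.mem_ofPred_eq, f_apply] using
        hmax (a := (z, y)) (Set.mk_mem_prod hz (mem_sphere_zero_iff_norm.mpr hy))
    simpa only [f_apply] using strongDual_apply_eq_mul_inner_of_isMaxOn_sphere hx f_max z

theorem exists_isCEigentriple [FiniteDimensional ℝ E] [FiniteDimensional ℝ F]
    [Nontrivial E] [Nontrivial F] {T : E →L[ℝ] F →L[ℝ] F} (hT : ∀ x, IsSelfAdjoint (T x)) :
    ∃ (c : ℝ) (x : E) (y : F), IsCEigentriple T c x y := by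
  have := FiniteDimensional.proper_real E
  have := FiniteDimensional.proper_real F
  have form_continuous : Continuous fun p : E × F ↦ ⟪T p.1 p.2, p.2⟫_ℝ := by fun_prop
  obtain ⟨x, y, hx, hy, hmax⟩ := exists_isMaxOn_sphere_prod form_continuous.continuousOn
  exact ⟨_, x, y, .of_isMaxOn (hT x) hx hy hmax⟩

end CriticalPoints

section Tensor

variable {ι κ : Type*} [Fintype ι] [Fintype κ] [DecidableEq κ]

/-- The tensor `a` as the linear family of operators `x ↦ ∑ i, x i • a i`, where each slice `a i`
acts on column vectors as a matrix. -/
noncomputable def tensorCLM (a : ι → κ → κ → ℝ) :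
    EuclideanSpace ℝ ι →L[ℝ] EuclideanSpace ℝ κ →L[ℝ] EuclideanSpace ℝ κ :=
  ∑ i, (EuclideanSpace.proj i).smulRight (Matrix.toEuclideanCLM (𝕜 := ℝ) (Matrix.of (a i)))

theorem tensorCLM_apply (a : ι → κ → κ → ℝ) (x : EuclideanSpace ℝ ι) :
    tensorCLM a x = Matrix.toEuclideanCLM (𝕜 := ℝ) (∑ i, x i • Matrix.of (a i)) := by
  simp only [tensorCLM, _root_.sum_apply, ContinuousLinearMap.smulRight_apply,
    PiLp.proj_apply, map_sum, map_smul]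

theorem tensorCLM_apply_apply (a : ι → κ → κ → ℝ) (x : EuclideanSpace ℝ ι)
    (y : EuclideanSpace ℝ κ) (j : κ) :
    tensorCLM a x y j = ∑ i, ∑ k, a i j k * x i * y k := by
  simp [tensorCLM_apply, Matrix.mulVec, dotProduct, mul_assoc, mul_left_comm]

theorem inner_tensorCLM_single [DecidableEq ι] (a : ι → κ → κ → ℝ) (i : ι)
    (y : EuclideanSpace ℝ κ) :
    ⟪tensorCLM a (EuclideanSpace.single i 1) y, y⟫_ℝ = ∑ j, ∑ k, a i j k * y j * y k := by
  have slice_eq : ∑ j, EuclideanSpace.single i (1 : ℝ) j • Matrix.of (a j) = Matrix.of (a i) := by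
    simp
  rw [tensorCLM_apply, slice_eq, real_inner_comm, Matrix.inner_toEuclideanCLM]
  simp [Matrix.mulVec, dotProduct, mul_sum, mul_assoc, mul_left_comm]

theorem isSelfAdjoint_tensorCLM_apply {a : ι → κ → κ → ℝ} (ha : ∀ i j k, a i j k = a i k j)
    (x : EuclideanSpace ℝ ι) : IsSelfAdjoint (tensorCLM a x) := by
  have isSelfAdjoint_slice (i : ι) : IsSelfAdjoint (Matrix.of (a i)) :=
    Matrix.ext fun j k ↦ ha i k j
  rw [tensorCLM_apply]
  exact (isSelfAdjoint_sum _ fun i _ ↦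
    (IsSelfAdjoint.all (x i)).smul (isSelfAdjoint_slice i)).map Matrix.toEuclideanCLM

end Tensor

theorem sum_mul_self_eq_one_of_norm_eq_one {ι : Type*} [Fintype ι] {x : EuclideanSpace ℝ ι}
    (hx : ‖x‖ = 1) : ∑ i, x i * x i = 1 := by
  simpa [hx, pow_two] using (EuclideanSpace.real_norm_sq_eq x).symm

theorem stmt0_general {ι κ : Type*} [Fintype ι] [Fintype κ] [Nonempty ι] [Nonempty κ]
    (a : ι → κ → κ → ℝ) (ha : ∀ i j k, a i j k = a i k j) :
    ∃ (c : ℝ) (x : ι → ℝ) (y : κ → ℝ),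
      (∀ i, ∑ j, ∑ k, a i j k * y j * y k = c * x i) ∧
      (∀ k, ∑ i, ∑ j, a i j k * x i * y j = c * y k) ∧
      (∑ i, x i * x i = 1) ∧ (∑ j, y j * y j = 1) := by
  classical
  obtain ⟨c, x, y, h⟩ := exists_isCEigentriple (T := tensorCLM a) (isSelfAdjoint_tensorCLM_apply ha)
  refine ⟨c, x, y, fun i ↦ ?_, fun k ↦ ?_, sum_mul_self_eq_one_of_norm_eq_one h.norm_left,
    sum_mul_self_eq_one_of_norm_eq_one h.norm_right⟩
  · calc ∑ j, ∑ k, a i j k * y j * y k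
        = ⟪tensorCLM a (EuclideanSpace.single i 1) y, y⟫_ℝ := (inner_tensorCLM_single a i y).symm
      _ = c * ⟪x, EuclideanSpace.single i 1⟫_ℝ := h.inner_apply_eq_mul_inner _
      _ = c * x i := by simp [EuclideanSpace.inner_single_right]
  · calc ∑ i, ∑ j, a i j k * x i * y j
        = ∑ i, ∑ j, a i k j * x i * y j := by simp_rw [ha _ k]
      _ = tensorCLM a x y k := (tensorCLM_apply_apply a x y k).symm
      _ = c * y k := by rw [h.apply_eq_smul, PiLp.smul_apply, smul_eq_mul]

/-- Every piezoelectric-type tensor has a C-eigenvalue with associated left and right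
C-eigenvectors. -/
theorem stmt0 {n : ℕ} (hn : 1 ≤ n) (a : Fin n → Fin n → Fin n → ℝ)
    (hA : ∀ i j k, a i j k = a i k j) :
    ∃ (lam : ℝ) (x y : Fin n → ℝ), CEig a lam x y :=
  haveI : NeZero n := ⟨Nat.one_le_iff_ne_zero.mp hn⟩
  stmt0_general a hA
end

section
/- Let A = (a_{ijk}) ∈ ℝ^{n×n×n} be a piezoelectric-type tensor and suppose λ* is the largest C-eigenvalue of A (i.e., λ* is a C-eigenvalue and every C-eigenvalue λ of A satisfies λ ≤ λ*). Then λ* = max{ Σ_{i,j,k} a_{ijk} x_i y_j y_k : x, y ∈ ℝ^n, xᵀx = 1, yᵀy = 1 }. -/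
open Finset

/-! Every C-eigenvalue is the value of the cubic form `x A y y` at its eigenvectors, so it suffices
that a maximizer `(x, y)` of the form over the product of the unit spheres, which exists by
compactness, is a pair of C-eigenvectors for the maximum. With `y` fixed the form is linear in `x`
with gradient `A y y`, and a linear form is maximal on the sphere only in the direction of its
gradient. With `x` fixed it is the quadratic form in `y` of the symmetric matrix `x A`, and the
Rayleigh principle makes `y` an eigenvector of that matrix. -/

open Matrix

section UnitSphere

variable {ι : Type*} [Fintype ι]

lemma exists_eq_smul_of_ne_zero {v : ι → ℝ} (hv : v ≠ 0) :
    ∃ (r : ℝ) (u : ι → ℝ), 0 < r ∧ u ⬝ᵥ u = 1 ∧ v = r • u := by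
  have hpos : 0 < v ⬝ᵥ v := by simpa using dotProduct_star_self_pos_iff.2 hv
  have hr : 0 < √(v ⬝ᵥ v) := Real.sqrt_pos.2 hpos
  refine ⟨√(v ⬝ᵥ v), (√(v ⬝ᵥ v))⁻¹ • v, hr, ?_, (smul_inv_smul₀ hr.ne' v).symm⟩
  rw [smul_dotProduct, dotProduct_smul, smul_smul, ← mul_inv, Real.mul_self_sqrt hpos.le,
    smul_eq_mul, inv_mul_cancel₀ hpos.ne']

lemma isCompact_dotProduct_self_eq_one : IsCompact {x : ι → ℝ | x ⬝ᵥ x = 1} := by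
  refine (isCompact_univ_pi fun _ => isCompact_Icc (a := (-1 : ℝ)) (b := 1)).of_isClosed_subset
    (isClosed_eq (by fun_prop) continuous_const) fun x hx i _ => ?_
  have hle : x i * x i ≤ x ⬝ᵥ x :=
    single_le_sum (f := fun i => x i * x i) (fun j _ => mul_self_nonneg (x j)) (mem_univ i)
  exact abs_le.1 (abs_le_one_iff_mul_self_le_one.2 (hle.trans_eq hx))

lemma eq_smul_of_forall_dotProduct_le {c x : ι → ℝ} (hx : x ⬝ᵥ x = 1)
    (hmax : ∀ u, u ⬝ᵥ u = 1 → c ⬝ᵥ u ≤ c ⬝ᵥ x) : c = (c ⬝ᵥ x) • x := by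
  rcases eq_or_ne c 0 with rfl | hc
  · simp
  obtain ⟨r, u, hr, hu, rfl⟩ := exists_eq_smul_of_ne_zero hc
  have hux : 1 ≤ u ⬝ᵥ x := by
    simpa only [smul_dotProduct, smul_eq_mul, hu, mul_le_mul_iff_right₀ hr] using hmax u hu
  have hdist : (u - x) ⬝ᵥ (u - x) = 2 - 2 * (u ⬝ᵥ x) := by
    rw [sub_dotProduct, dotProduct_sub, dotProduct_sub, dotProduct_comm x u, hu, hx]
    ring
  have hsq : 0 ≤ (u - x) ⬝ᵥ (u - x) := sum_nonneg fun i _ => mul_self_nonneg ((u - x) i)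
  obtain rfl : u = x := sub_eq_zero.1 (dotProduct_self_eq_zero.1 (by linarith))
  rw [smul_dotProduct, hu, smul_eq_mul, mul_one]

lemma dotProduct_mulVec_le_mul_dotProduct_self {B : Matrix ι ι ℝ} {M : ℝ}
    (hB : ∀ u, u ⬝ᵥ u = 1 → u ⬝ᵥ B *ᵥ u ≤ M) (v : ι → ℝ) : v ⬝ᵥ B *ᵥ v ≤ M * (v ⬝ᵥ v) := by
  rcases eq_or_ne v 0 with rfl | hv
  · simp
  obtain ⟨r, u, -, hu, rfl⟩ := exists_eq_smul_of_ne_zero hv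
  simp only [mulVec_smul, smul_dotProduct, dotProduct_smul, smul_eq_mul, hu]
  nlinarith only [mul_le_mul_of_nonneg_left (hB u hu) (mul_self_nonneg r)]

lemma mulVec_eq_smul_of_forall_dotProduct_mulVec_le {B : Matrix ι ι ℝ} (hB : B.IsSymm)
    {y : ι → ℝ} (hy : y ⬝ᵥ y = 1) (hmax : ∀ u, u ⬝ᵥ u = 1 → u ⬝ᵥ B *ᵥ u ≤ y ⬝ᵥ B *ᵥ y) :
    B *ᵥ y = (y ⬝ᵥ B *ᵥ y) • y := by
  classical
  set M := y ⬝ᵥ B *ᵥ y with hM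
  have hform (v : ι → ℝ) : v ⬝ᵥ (M • (1 : Matrix ι ι ℝ) - B) *ᵥ v = M * (v ⬝ᵥ v) - v ⬝ᵥ B *ᵥ v := by
    rw [sub_mulVec, smul_mulVec, one_mulVec, dotProduct_sub, dotProduct_smul, smul_eq_mul]
  have hpsd : (M • (1 : Matrix ι ι ℝ) - B).PosSemidef := by
    refine .of_dotProduct_mulVec_nonneg ?_ fun v => ?_
    · simp [IsHermitian, conjTranspose_eq_transpose_of_trivial, hB.eq]
    · rw [star_trivial, hform]
      exact sub_nonneg.2 (dotProduct_mulVec_le_mul_dotProduct_self hmax v)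
  have hker : (M • (1 : Matrix ι ι ℝ) - B) *ᵥ y = 0 := by
    rw [← hpsd.dotProduct_mulVec_zero_iff, star_trivial, hform, hy, mul_one, hM, sub_self]
  rw [sub_mulVec, smul_mulVec, one_mulVec, sub_eq_zero] at hker
  exact hker.symm

end UnitSphere

section Tensor

variable {ι κ : Type*}

/-- The contraction `x A` of a third-order tensor, encoded as the family `A i` of its slices in the
first index, with a vector in that index. -/
def leftContraction [Fintype ι] (A : ι → Matrix κ κ ℝ) (x : ι → ℝ) : Matrix κ κ ℝ :=
  ∑ i, x i • A i

lemma isSymm_leftContraction [Fintype ι] {A : ι → Matrix κ κ ℝ} (hA : ∀ i, (A i).IsSymm)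
    (x : ι → ℝ) : (leftContraction A x).IsSymm := by
  simp only [leftContraction, IsSymm, transpose_sum, transpose_smul, (hA _).eq]

variable [Fintype κ]

/-- The contraction `A y y` of a third-order tensor, encoded as in `leftContraction`, with a vector
in its last two indices. -/
def rightContraction (A : ι → Matrix κ κ ℝ) (y : κ → ℝ) : ι → ℝ :=
  fun i => y ⬝ᵥ A i *ᵥ y

variable [Fintype ι]

/-- C-eigenvalues, with left and right C-eigenvectors, of a tensor whose first index may range over
a different type than the other two. The slices `A i` are meant to be symmetric, so that it does not
matter in which of the last two indices `y` is contracted. -/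
structure IsCEigentriple_s4 (A : ι → Matrix κ κ ℝ) (lam : ℝ) (x : ι → ℝ) (y : κ → ℝ) : Prop where
  rightContraction_eq : rightContraction A y = lam • x
  mulVec_eq : leftContraction A x *ᵥ y = lam • y
  left_unit : x ⬝ᵥ x = 1
  right_unit : y ⬝ᵥ y = 1

variable {A : ι → Matrix κ κ ℝ} {lam : ℝ} {x : ι → ℝ} {y : κ → ℝ}

lemma leftContraction_mulVec (A : ι → Matrix κ κ ℝ) (x : ι → ℝ) (y : κ → ℝ) :
    leftContraction A x *ᵥ y = ∑ i, x i • (A i *ᵥ y) := by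
  simp only [leftContraction, sum_mulVec, smul_mulVec]

lemma rightContraction_dotProduct (A : ι → Matrix κ κ ℝ) (x : ι → ℝ) (y : κ → ℝ) :
    rightContraction A y ⬝ᵥ x = y ⬝ᵥ leftContraction A x *ᵥ y := by
  simp only [leftContraction_mulVec, dotProduct_sum, dotProduct_smul, smul_eq_mul]
  exact sum_congr rfl fun i _ => mul_comm _ _

lemma IsCEigentriple_s4.rightContraction_dotProduct_eq (h : IsCEigentriple_s4 A lam x y) :
    rightContraction A y ⬝ᵥ x = lam := by
  rw [h.rightContraction_eq, smul_dotProduct, h.left_unit, smul_eq_mul, mul_one]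

lemma isCEigentriple_of_forall_le (hA : ∀ i, (A i).IsSymm) (hx : x ⬝ᵥ x = 1) (hy : y ⬝ᵥ y = 1)
    (hmax : ∀ u v, u ⬝ᵥ u = 1 → v ⬝ᵥ v = 1 →
      rightContraction A v ⬝ᵥ u ≤ rightContraction A y ⬝ᵥ x) :
    IsCEigentriple_s4 A (rightContraction A y ⬝ᵥ x) x y where
  rightContraction_eq := eq_smul_of_forall_dotProduct_le hx fun u hu => hmax u y hu hy
  mulVec_eq := by
    simp only [rightContraction_dotProduct] at hmax ⊢
    exact mulVec_eq_smul_of_forall_dotProduct_mulVec_le (isSymm_leftContraction hA x) hy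
      fun v hv => hmax x v hx hv
  left_unit := hx
  right_unit := hy

lemma exists_forall_rightContraction_dotProduct_le (A : ι → Matrix κ κ ℝ)
    (hx : x ⬝ᵥ x = 1) (hy : y ⬝ᵥ y = 1) :
    ∃ x₀ y₀, x₀ ⬝ᵥ x₀ = 1 ∧ y₀ ⬝ᵥ y₀ = 1 ∧ ∀ u v, u ⬝ᵥ u = 1 → v ⬝ᵥ v = 1 →
      rightContraction A v ⬝ᵥ u ≤ rightContraction A y₀ ⬝ᵥ x₀ := by
  have hcont : Continuous fun p : (ι → ℝ) × (κ → ℝ) => rightContraction A p.2 ⬝ᵥ p.1 := by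
    unfold rightContraction
    fun_prop
  obtain ⟨⟨x₀, y₀⟩, ⟨hx₀, hy₀⟩, hmax⟩ :=
    (isCompact_dotProduct_self_eq_one.prod isCompact_dotProduct_self_eq_one).exists_isMaxOn
      ⟨(x, y), hx, hy⟩ hcont.continuousOn
  exact ⟨x₀, y₀, hx₀, hy₀, fun u v hu hv => isMaxOn_iff.1 hmax (u, v) ⟨hu, hv⟩⟩

theorem stmt4_general (hA : ∀ i, (A i).IsSymm) :
    IsGreatest {mu | ∃ x y, IsCEigentriple_s4 A mu x y} lam ↔
      IsGreatest {r | ∃ x y, x ⬝ᵥ x = 1 ∧ y ⬝ᵥ y = 1 ∧ r = rightContraction A y ⬝ᵥ x} lam := by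
  constructor
  · rintro ⟨⟨x, y, h⟩, hub⟩
    refine ⟨⟨x, y, h.left_unit, h.right_unit, h.rightContraction_dotProduct_eq.symm⟩, ?_⟩
    obtain ⟨x₀, y₀, hx₀, hy₀, hmax⟩ :=
      exists_forall_rightContraction_dotProduct_le A h.left_unit h.right_unit
    rintro _ ⟨u, v, hu, hv, rfl⟩
    exact (hmax u v hu hv).trans (hub ⟨x₀, y₀, isCEigentriple_of_forall_le hA hx₀ hy₀ hmax⟩)
  · rintro ⟨⟨x, y, hx, hy, rfl⟩, hub⟩
    refine ⟨⟨x, y, isCEigentriple_of_forall_le hA hx hy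
      fun u v hu hv => hub ⟨u, v, hu, hv, rfl⟩⟩, ?_⟩
    rintro mu ⟨u, v, h⟩
    exact hub ⟨u, v, h.left_unit, h.right_unit, h.rightContraction_dotProduct_eq.symm⟩

end Tensor

section Coordinates

lemma rightContraction_of_apply {ι κ : Type*} [Fintype κ] (a : ι → κ → κ → ℝ) (y : κ → ℝ) (i : ι) :
    rightContraction (fun i => of (a i)) y i = ∑ j, ∑ k, a i j k * y j * y k := by
  simp only [rightContraction, dotProduct, mulVec, of_apply, mul_sum]
  exact sum_congr rfl fun j _ => sum_congr rfl fun k _ => by ring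

variable {ι κ : Type*} [Fintype ι] [Fintype κ] (a : ι → κ → κ → ℝ) (x : ι → ℝ) (y : κ → ℝ)

lemma leftContraction_of_mulVec_apply (j : κ) :
    (leftContraction (fun i => of (a i)) x *ᵥ y) j = ∑ i, ∑ k, a i j k * x i * y k := by
  rw [leftContraction_mulVec]
  simp only [Finset.sum_apply, Pi.smul_apply, mulVec, dotProduct, of_apply, smul_eq_mul, mul_sum]
  exact sum_congr rfl fun i _ => sum_congr rfl fun k _ => by ring

lemma rightContraction_of_dotProduct :
    rightContraction (fun i => of (a i)) y ⬝ᵥ x = ∑ i, ∑ j, ∑ k, a i j k * x i * y j * y k := by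
  simp only [dotProduct, rightContraction_of_apply, sum_mul]
  exact sum_congr rfl fun i _ => sum_congr rfl fun j _ => sum_congr rfl fun k _ => by ring

lemma isCEigentriple_of_iff_cEig {n : ℕ} {a : Fin n → Fin n → Fin n → ℝ}
    (hA : ∀ i j k, a i j k = a i k j) {lam : ℝ} {x y : Fin n → ℝ} :
    IsCEigentriple_s4 (fun i => of (a i)) lam x y ↔ CEig a lam x y := by
  have hleft : leftContraction (fun i => of (a i)) x *ᵥ y = lam • y ↔
      ∀ i, ∑ j, ∑ k, a j k i * x j * y k = lam * y i := by
    simp only [funext_iff, leftContraction_of_mulVec_apply, Pi.smul_apply, smul_eq_mul, hA]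
  have hright : rightContraction (fun i => of (a i)) y = lam • x ↔
      ∀ i, ∑ j, ∑ k, a i j k * y j * y k = lam * x i := by
    simp only [funext_iff, rightContraction_of_apply, Pi.smul_apply, smul_eq_mul]
  exact ⟨fun ⟨hr, hl, hx, hy⟩ => ⟨hright.1 hr, hleft.1 hl, hx, hy⟩,
    fun ⟨hr, hl, hx, hy⟩ => ⟨hright.2 hr, hleft.2 hl, hx, hy⟩⟩

end Coordinates

/-- The largest C-eigenvalue `λ*` satisfies
`λ* = max { x A y y : xᵀx = 1, yᵀy = 1 }`. -/
theorem stmt4 {n : ℕ} (a : Fin n → Fin n → Fin n → ℝ)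
    (hA : ∀ i j k, a i j k = a i k j)
    (lamstar : ℝ)
    (hmem : ∃ x y : Fin n → ℝ, CEig a lamstar x y)
    (hmax : ∀ lam : ℝ, (∃ x y : Fin n → ℝ, CEig a lam x y) → lam ≤ lamstar) :
    IsGreatest {r : ℝ | ∃ x y : Fin n → ℝ, (∑ i, x i * x i = 1) ∧ (∑ i, y i * y i = 1) ∧
      r = ∑ i, ∑ j, ∑ k, a i j k * x i * y j * y k} lamstar := by
  have hsymm (i : Fin n) : (of (a i)).IsSymm := IsSymm.ext fun j k => hA i k j
  have general := (stmt4_general (lam := lamstar) hsymm).1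
  simp only [isCEigentriple_of_iff_cEig hA, rightContraction_of_dotProduct] at general
  exact general ⟨hmem, fun lam => hmax lam⟩
end

section
/- (Theorem 2.1) Let A = (a_{ijk}) ∈ ℝ^{n×n×n} (n ≥ 1) be a piezoelectric-type tensor and let λ be a C-eigenvalue of A. Then −ρ ≤ λ ≤ ρ, where ρ := max_{i,j∈N} (R_i^{(1)}(A) · R_j^{(3)}(A))^{1/2}, R_i^{(1)}(A) := Σ_{l,k∈N} |a_{ilk}| and R_j^{(3)}(A) := Σ_{l,k∈N} |a_{lkj}|. -/
open Finset

/-- `R_i^{(1)}(A) = ∑_{l,k} |a_{ilk}|`. -/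
noncomputable def R1 {n : ℕ} (a : Fin n → Fin n → Fin n → ℝ) (i : Fin n) : ℝ :=
  ∑ l, ∑ k, |a i l k|

/-- `R_j^{(3)}(A) = ∑_{l,k} |a_{lkj}|`. -/
noncomputable def R3 {n : ℕ} (a : Fin n → Fin n → Fin n → ℝ) (j : Fin n) : ℝ :=
  ∑ l, ∑ k, |a l k j|

/-- `ρ = max_{i,j} (R_i^{(1)}(A) R_j^{(3)}(A))^{1/2}`. -/
noncomputable def rho {n : ℕ} (hn : 0 < n) (a : Fin n → Fin n → Fin n → ℝ) : ℝ :=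
  Finset.univ.sup' (Finset.univ_nonempty_iff.mpr ⟨(⟨0, hn⟩, ⟨0, hn⟩)⟩)
    (fun p : Fin n × Fin n => Real.sqrt (R1 a p.1 * R3 a p.2))

/-!
Contracting the middle index of the tensor `a` with `y` gives a matrix `B` with `B y = λ x` and
`xᵀ B = λ yᵀ`, so `|λ|` is a singular value of `B`. In the sup norm these two equations give
`|λ|² ≤ ‖B‖ * ‖Bᵀ‖`, the product of the largest absolute row sum and the largest absolute column
sum of `B`. Each row sum is at most some `R1 a i * ‖y‖` and each column sum at most some
`R3 a j * ‖y‖`, and `‖y‖ ≤ 1` for the sup norm of a Euclidean unit vector.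
-/

section SingularValue

open Matrix
open scoped Matrix.Norms.Operator

variable {m n 𝕜 : Type*} [Fintype m] [Fintype n]

theorem exists_linfty_opNorm_eq_sum_row [SeminormedAddCommGroup 𝕜] [Nonempty m]
    (B : Matrix m n 𝕜) : ∃ i, ‖B‖ = ∑ k, ‖B i k‖ := by
  obtain ⟨i, -, hi⟩ := exists_mem_eq_sup univ univ_nonempty fun i => ∑ k, ‖B i k‖₊
  exact ⟨i, by simp only [linfty_opNorm_def, hi, NNReal.coe_sum, coe_nnnorm]⟩

theorem norm_sq_le_linfty_opNorm_mul_transpose [NormedField 𝕜] {B : Matrix m n 𝕜} {s : 𝕜}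
    {x : m → 𝕜} {z : n → 𝕜} (hz : z ≠ 0) (hBz : B *ᵥ z = s • x) (hxB : x ᵥ* B = s • z) :
    ‖s‖ ^ 2 ≤ ‖B‖ * ‖Bᵀ‖ := by
  have hx_le : ‖s‖ * ‖x‖ ≤ ‖B‖ * ‖z‖ := by
    simpa only [hBz, norm_smul] using linfty_opNorm_mulVec B z
  have hz_le : ‖s‖ * ‖z‖ ≤ ‖Bᵀ‖ * ‖x‖ := by
    simpa only [mulVec_transpose, hxB, norm_smul] using linfty_opNorm_mulVec Bᵀ x
  refine le_of_mul_le_mul_right ?_ (norm_pos_iff.mpr hz)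
  calc ‖s‖ ^ 2 * ‖z‖ = ‖s‖ * (‖s‖ * ‖z‖) := by ring
    _ ≤ ‖s‖ * (‖Bᵀ‖ * ‖x‖) := by gcongr
    _ = ‖Bᵀ‖ * (‖s‖ * ‖x‖) := by ring
    _ ≤ ‖Bᵀ‖ * (‖B‖ * ‖z‖) := by gcongr
    _ = ‖B‖ * ‖Bᵀ‖ * ‖z‖ := by ring

end SingularValue

section MiddleContraction

open Matrix
open scoped Matrix.Norms.Operator

variable {ι κ τ 𝕜 : Type*} [Fintype κ]

/-- The matrix obtained from the third-order tensor `a` by contracting its middle index with the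
vector `y`. The three index types are allowed to differ. -/
def middleContraction [NonUnitalNonAssocSemiring 𝕜] (a : ι → κ → τ → 𝕜) (y : κ → 𝕜) :
    Matrix ι τ 𝕜 :=
  of fun i k => ∑ j, a i j k * y j

theorem middleContraction_mulVec [Fintype τ] [NonUnitalNonAssocSemiring 𝕜] (a : ι → κ → τ → 𝕜)
    (y : κ → 𝕜) (z : τ → 𝕜) (i : ι) :
    (middleContraction a y *ᵥ z) i = ∑ j, ∑ k, a i j k * y j * z k := by
  simp only [middleContraction, mulVec, dotProduct, of_apply, sum_mul]
  exact sum_comm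

theorem vecMul_middleContraction [Fintype ι] [NonUnitalCommSemiring 𝕜] (a : ι → κ → τ → 𝕜)
    (x : ι → 𝕜) (y : κ → 𝕜) (k : τ) :
    (x ᵥ* middleContraction a y) k = ∑ i, ∑ j, a i j k * x i * y j := by
  simp only [middleContraction, vecMul, dotProduct, of_apply, mul_sum, mul_left_comm, mul_assoc]

theorem exists_norm_middleContraction_le [Fintype ι] [Fintype τ] [Nonempty ι]
    [NonUnitalSeminormedRing 𝕜] (a : ι → κ → τ → 𝕜) (y : κ → 𝕜) :
    ∃ i, ‖middleContraction a y‖ ≤ (∑ j, ∑ k, ‖a i j k‖) * ‖y‖ := by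
  obtain ⟨i, hi⟩ := exists_linfty_opNorm_eq_sum_row (middleContraction a y)
  refine ⟨i, hi.trans_le ?_⟩
  calc ∑ k, ‖∑ j, a i j k * y j‖ ≤ ∑ k, ∑ j, ‖a i j k‖ * ‖y‖ := by
        gcongr with k
        refine norm_sum_le_of_le _ fun j _ => (norm_mul_le _ _).trans ?_
        gcongr
        exact norm_le_pi_norm y j
    _ = (∑ j, ∑ k, ‖a i j k‖) * ‖y‖ := by
        simp only [sum_mul]
        exact sum_comm

theorem exists_norm_transpose_middleContraction_le [Fintype ι] [Fintype τ] [Nonempty τ]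
    [NonUnitalSeminormedRing 𝕜] (a : ι → κ → τ → 𝕜) (y : κ → 𝕜) :
    ∃ k, ‖(middleContraction a y)ᵀ‖ ≤ (∑ i, ∑ j, ‖a i j k‖) * ‖y‖ := by
  obtain ⟨k, hk⟩ := exists_norm_middleContraction_le (fun k j i => a i j k) y
  rw [sum_comm] at hk
  exact ⟨k, hk⟩

theorem stmt5_general [Fintype ι] [Fintype τ] [Nonempty ι] [NormedField 𝕜]
    (a : ι → κ → τ → 𝕜) {lam : 𝕜} {x : ι → 𝕜} {y : κ → 𝕜} {z : τ → 𝕜} (hz : z ≠ 0)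
    (hx_eq : ∀ i, ∑ j, ∑ k, a i j k * y j * z k = lam * x i)
    (hz_eq : ∀ k, ∑ i, ∑ j, a i j k * x i * y j = lam * z k) :
    ∃ i k, ‖lam‖ ≤ √((∑ j, ∑ l, ‖a i j l‖) * ∑ l, ∑ j, ‖a l j k‖) * ‖y‖ := by
  obtain ⟨k₀, -⟩ := Function.ne_iff.mp hz
  have : Nonempty τ := ⟨k₀⟩
  obtain ⟨i, hi⟩ := exists_norm_middleContraction_le a y
  obtain ⟨k, hk⟩ := exists_norm_transpose_middleContraction_le a y
  refine ⟨i, k, ?_⟩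
  have hlam : ‖lam‖ ^ 2 ≤ ‖middleContraction a y‖ * ‖(middleContraction a y)ᵀ‖ :=
    norm_sq_le_linfty_opNorm_mul_transpose hz
      (funext fun i => (middleContraction_mulVec a y z i).trans (hx_eq i))
      (funext fun k => (vecMul_middleContraction a x y k).trans (hz_eq k))
  refine (sq_le_sq₀ (norm_nonneg _) (by positivity)).mp ?_
  calc ‖lam‖ ^ 2 ≤ (∑ j, ∑ l, ‖a i j l‖) * ‖y‖ * ((∑ l, ∑ j, ‖a l j k‖) * ‖y‖) :=
        hlam.trans (by gcongr)
    _ = (√((∑ j, ∑ l, ‖a i j l‖) * ∑ l, ∑ j, ‖a l j k‖) * ‖y‖) ^ 2 := by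
        rw [mul_pow, Real.sq_sqrt (by positivity)]
        ring

end MiddleContraction

theorem norm_le_one_of_sum_mul_self_le_one {ι : Type*} [Fintype ι] {y : ι → ℝ}
    (hy : ∑ i, y i * y i ≤ 1) : ‖y‖ ≤ 1 :=
  (pi_norm_le_iff_of_nonneg zero_le_one).mpr fun i => abs_le_one_iff_mul_self_le_one.mpr <|
    (single_le_sum (fun j _ => mul_self_nonneg (y j)) (mem_univ i)).trans hy

theorem CEig.right_ne_zero {n : ℕ} {a : Fin n → Fin n → Fin n → ℝ} {lam : ℝ} {x y : Fin n → ℝ}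
    (h : CEig a lam x y) : y ≠ 0 := by
  rintro rfl
  simpa only [Pi.zero_apply, mul_zero, sum_const_zero, zero_ne_one] using h.2.2.2

theorem sqrt_R1_mul_R3_le_rho {n : ℕ} (hn : 0 < n) (a : Fin n → Fin n → Fin n → ℝ)
    (i j : Fin n) : √(R1 a i * R3 a j) ≤ rho hn a :=
  le_sup' (fun p : Fin n × Fin n => √(R1 a p.1 * R3 a p.2)) (mem_univ (i, j))

theorem CEig.abs_le_rho {n : ℕ} (hn : 0 < n) {a : Fin n → Fin n → Fin n → ℝ} {lam : ℝ}
    {x y : Fin n → ℝ} (h : CEig a lam x y) : |lam| ≤ rho hn a := by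
  have : Nonempty (Fin n) := ⟨⟨0, hn⟩⟩
  obtain ⟨i, j, hij⟩ := stmt5_general a h.right_ne_zero h.1 h.2.1
  calc |lam| ≤ √(R1 a i * R3 a j) * ‖y‖ := hij
    _ ≤ √(R1 a i * R3 a j) := mul_le_of_le_one_right (Real.sqrt_nonneg _)
        (norm_le_one_of_sum_mul_self_le_one h.2.2.2.le)
    _ ≤ rho hn a := sqrt_R1_mul_R3_le_rho hn a i j

/-- Theorem 2.1: every C-eigenvalue `λ` satisfies `-ρ ≤ λ ≤ ρ`. -/
theorem stmt5 {n : ℕ} (hn : 0 < n) (a : Fin n → Fin n → Fin n → ℝ)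
    (hA : ∀ i j k, a i j k = a i k j)
    (lam : ℝ) (x y : Fin n → ℝ) (h : CEig a lam x y) :
    -(rho hn a) ≤ lam ∧ lam ≤ rho hn a :=
  abs_le.mp (h.abs_le_rho hn)
end

section
/- (Inequality (2.6)) Let A = (a_{ijk}) ∈ ℝ^{n×n×n} be a piezoelectric-type tensor, λ a C-eigenvalue of A with associated left and right C-eigenvectors x and y, and let p, q ∈ N be indices with |x_p| = max_{i∈N} |x_i| and |y_q| = max_{i∈N} |y_i|. Then |λ| ≤ (R_p^{(1)}(A) · R_q^{(3)}(A))^{1/2}, where R_p^{(1)}(A) := Σ_{l,k∈N} |a_{plk}| and R_q^{(3)}(A) := Σ_{l,k∈N} |a_{lkq}|. -/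
open Finset

/-!
Write `‖·‖` for the sup norm. Row `p` of `A y y = λ x` gives `|λ| ‖x‖ ≤ R_p^{(1)} ‖y‖²`, and row `q`
of `x A y = λ y`, after cancelling `‖y‖`, gives `|λ| ≤ R_q^{(3)} ‖x‖`. Combining the two eliminates
`‖x‖`: `|λ|² ≤ R_p^{(1)} R_q^{(3)} ‖y‖²`, and `‖y‖ ≤ 1` for a Euclidean unit vector.
-/

section Norm

variable {ι κ E R : Type*} [Fintype ι] [Fintype κ]

theorem pi_norm_eq_norm_apply [SeminormedAddGroup E] {v : ι → E} {i : ι}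
    (hi : ∀ j, ‖v j‖ ≤ ‖v i‖) : ‖v‖ = ‖v i‖ :=
  le_antisymm ((pi_norm_le_iff_of_nonneg (norm_nonneg _)).2 hi) (norm_le_pi_norm v i)

theorem norm_sum_sum_mul_mul_le [NonUnitalSeminormedRing R]
    (b : ι → κ → R) (u : ι → R) (v : κ → R) :
    ‖∑ j, ∑ k, b j k * u j * v k‖ ≤ (∑ j, ∑ k, ‖b j k‖) * (‖u‖ * ‖v‖) := by
  simp only [sum_mul]
  refine norm_sum_le_of_le _ fun j _ => norm_sum_le_of_le _ fun k _ => ?_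
  calc ‖b j k * u j * v k‖ ≤ ‖b j k‖ * ‖u j‖ * ‖v k‖ := norm_mul₃_le
    _ = ‖b j k‖ * (‖u j‖ * ‖v k‖) := mul_assoc _ _ _
    _ ≤ ‖b j k‖ * (‖u‖ * ‖v‖) := by gcongr <;> exact norm_le_pi_norm _ _

theorem pi_norm_le_sqrt_sum_norm_sq [SeminormedAddGroup E] (v : ι → E) :
    ‖v‖ ≤ √(∑ i, ‖v i‖ ^ 2) :=
  (pi_norm_le_iff_of_nonneg (Real.sqrt_nonneg _)).2 fun i =>
    Real.le_sqrt_of_sq_le <|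
      single_le_sum (f := fun i => ‖v i‖ ^ 2) (fun _ _ => sq_nonneg _) (mem_univ i)

end Norm

theorem stmt9_general {ι κ R : Type*} [Fintype ι] [Fintype κ] [NonUnitalNormedRing R]
    [NormMulClass R] {a : ι → κ → κ → R} {lam : R} {x : ι → R} {y : κ → R}
    (hleft : ∀ i, ∑ j, ∑ k, a i j k * y j * y k = lam * x i)
    (hright : ∀ i, ∑ j, ∑ k, a j k i * x j * y k = lam * y i) (hy : y ≠ 0) {p : ι} {q : κ}
    (hp : ∀ i, ‖x i‖ ≤ ‖x p‖) (hq : ∀ i, ‖y i‖ ≤ ‖y q‖) :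
    ‖lam‖ ≤ √((∑ l, ∑ k, ‖a p l k‖) * ∑ l, ∑ k, ‖a l k q‖) * ‖y‖ := by
  set r₁ := ∑ l, ∑ k, ‖a p l k‖
  set r₃ := ∑ l, ∑ k, ‖a l k q‖
  have row_p : ‖lam‖ * ‖x‖ ≤ r₁ * (‖y‖ * ‖y‖) := by
    rw [pi_norm_eq_norm_apply hp, ← norm_mul, ← hleft p]
    exact norm_sum_sum_mul_mul_le (a p) y y
  have row_q : ‖lam‖ * ‖y‖ ≤ r₃ * ‖x‖ * ‖y‖ := by
    calc ‖lam‖ * ‖y‖ = ‖∑ j, ∑ k, a j k q * x j * y k‖ := by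
          rw [pi_norm_eq_norm_apply hq, ← norm_mul, hright q]
      _ ≤ r₃ * (‖x‖ * ‖y‖) := norm_sum_sum_mul_mul_le (fun j k => a j k q) x y
      _ = r₃ * ‖x‖ * ‖y‖ := (mul_assoc _ _ _).symm
  have lam_le : ‖lam‖ ≤ r₃ * ‖x‖ := le_of_mul_le_mul_right row_q (norm_pos_iff.2 hy)
  have sq_le : ‖lam‖ ^ 2 ≤ r₁ * r₃ * ‖y‖ ^ 2 :=
    calc ‖lam‖ ^ 2 = ‖lam‖ * ‖lam‖ := sq _
      _ ≤ ‖lam‖ * (r₃ * ‖x‖) := by gcongr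
      _ = r₃ * (‖lam‖ * ‖x‖) := mul_left_comm _ _ _
      _ ≤ r₃ * (r₁ * (‖y‖ * ‖y‖)) := by gcongr
      _ = r₁ * r₃ * ‖y‖ ^ 2 := by ring
  calc ‖lam‖ ≤ √(r₁ * r₃ * ‖y‖ ^ 2) := Real.le_sqrt_of_sq_le sq_le
    _ = √(r₁ * r₃) * ‖y‖ := by rw [Real.sqrt_mul' _ (sq_nonneg _), Real.sqrt_sq (norm_nonneg _)]

namespace CEig

variable {n : ℕ} {a : Fin n → Fin n → Fin n → ℝ} {lam : ℝ} {x y : Fin n → ℝ}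

theorem right_ne_zero_s9 (h : CEig a lam x y) : y ≠ 0 := by
  rintro rfl
  simpa only [Pi.zero_apply, mul_zero, sum_const_zero, zero_ne_one] using h.2.2.2

theorem norm_right_le_one (h : CEig a lam x y) : ‖y‖ ≤ 1 := by
  have sum_norm_sq : ∑ i, ‖y i‖ ^ 2 = 1 := by
    simpa only [Real.norm_eq_abs, sq, abs_mul_abs_self] using h.2.2.2
  simpa only [sum_norm_sq, Real.sqrt_one] using pi_norm_le_sqrt_sum_norm_sq y

end CEig

/-- Inequality (2.6): `|λ| ≤ (R_p^{(1)}(A) R_q^{(3)}(A))^{1/2}`. -/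
theorem stmt9 {n : ℕ} (a : Fin n → Fin n → Fin n → ℝ)
    (hA : ∀ i j k, a i j k = a i k j)
    (lam : ℝ) (x y : Fin n → ℝ) (h : CEig a lam x y)
    (p q : Fin n) (hp : ∀ i, |x i| ≤ |x p|) (hq : ∀ i, |y i| ≤ |y q|) :
    |lam| ≤ Real.sqrt (R1 a p * R3 a q) :=
  (stmt9_general h.1 h.2.1 h.right_ne_zero_s9 hp hq).trans
    (mul_le_of_le_one_right (Real.sqrt_nonneg _) h.norm_right_le_one)
end

section
/- (Theorem 2.2, first part) Let A = (a_{ijk}) ∈ ℝ^{n×n×n} (n ≥ 1) be a piezoelectric-type tensor, λ a C-eigenvalue of A, and S ⊆ N any subset. Then −ρ_S ≤ λ ≤ ρ_S, where ρ_S := max_{i,j∈N} (1/2)( R_j^{Δ_S,(3)}(A) + ( (R_j^{Δ_S,(3)}(A))² + 4 R_i^{(1)}(A) R_j^{Δ̄_S,(3)}(A) )^{1/2} ), with Δ_S := {(l,k) : l ∈ S or k ∈ S}, Δ̄_S := {(l,k) : l ∉ S and k ∉ S}, R_i^{(1)}(A) := Σ_{l,k∈N} |a_{ilk}|, R_j^{Δ_S,(3)}(A)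 := Σ_{(l,k)∈Δ_S} |a_{lkj}|, and R_j^{Δ̄_S,(3)}(A) := Σ_{(l,k)∈Δ̄_S} |a_{lkj}|. -/
open Finset

/-- `R_j^{Δ_S,(3)}(A) = ∑_{(l,k) : l ∈ S or k ∈ S} |a_{lkj}|`. -/
noncomputable def R3D {n : ℕ} (a : Fin n → Fin n → Fin n → ℝ) (S : Finset (Fin n))
    (j : Fin n) : ℝ :=
  ∑ l, ∑ k, if l ∈ S ∨ k ∈ S then |a l k j| else 0

/-- `R_j^{Δ̄_S,(3)}(A) = ∑_{(l,k) : l ∉ S and k ∉ S} |a_{lkj}|`. -/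
noncomputable def R3Dbar {n : ℕ} (a : Fin n → Fin n → Fin n → ℝ) (S : Finset (Fin n))
    (j : Fin n) : ℝ :=
  ∑ l, ∑ k, if l ∉ S ∧ k ∉ S then |a l k j| else 0

/-- `ρ_S = max_{i,j} (1/2)(R_j^{Δ_S,(3)} + ((R_j^{Δ_S,(3)})² + 4 R_i^{(1)} R_j^{Δ̄_S,(3)})^{1/2})`. -/
noncomputable def rhoS {n : ℕ} (hn : 0 < n) (a : Fin n → Fin n → Fin n → ℝ)
    (S : Finset (Fin n)) : ℝ :=
  Finset.univ.sup' (Finset.univ_nonempty_iff.mpr ⟨(⟨0, hn⟩, ⟨0, hn⟩)⟩)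
    (fun p : Fin n × Fin n =>
      (1 / 2) * (R3D a S p.2 +
        Real.sqrt ((R3D a S p.2) ^ 2 + 4 * R1 a p.1 * R3Dbar a S p.2)))

/-! Work with the sup norms `‖x‖, ‖y‖ ≤ 1` of the eigenvectors. The first eigenvector equation, read
where `|x i|` is largest, gives `|λ| ‖x‖ ≤ R₁ ‖y‖`. In the second, read where `|y j|` is largest,
bound `|x l| |y k|` by `‖y‖` for `(l, k) ∈ Δ` and by `‖x‖` for `(l, k) ∉ Δ`; this gives
`|λ| ‖y‖ ≤ R_Δ ‖y‖ + R_Δᶜ ‖x‖`. Eliminating `‖x‖` and cancelling `‖y‖ > 0` leaves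
`|λ|² ≤ R_Δ |λ| + R₁ R_Δᶜ`, so `|λ|` is at most the larger root of this quadratic. -/

theorem le_half_add_sqrt_of_sq_le {r b c : ℝ} (h : r ^ 2 ≤ b * r + c) :
    r ≤ (1 / 2) * (b + √(b ^ 2 + 4 * c)) := by
  have : 2 * r - b ≤ √(b ^ 2 + 4 * c) := Real.le_sqrt_of_sq_le (by linarith)
  linarith

section SupNorm

variable {ι κ : Type*} [Fintype ι] [Fintype κ]

theorem exists_norm_apply_eq_pi_norm {E : Type*} [SeminormedAddGroup E] [Nonempty ι] (x : ι → E) :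
    ∃ i, ‖x i‖ = ‖x‖ := by
  obtain ⟨i, hi⟩ := Finite.exists_max fun i => ‖x i‖
  exact ⟨i, (norm_le_pi_norm x i).antisymm ((pi_norm_le_iff_of_nonempty x).2 hi)⟩

theorem pi_norm_le_one_of_sum_mul_self_le_one {x : ι → ℝ} (hx : ∑ i, x i * x i ≤ 1) :
    ‖x‖ ≤ 1 := by
  refine (pi_norm_le_iff_of_nonneg zero_le_one).2 fun i => abs_le_one_iff_mul_self_le_one.2 ?_
  exact (single_le_sum (fun j _ => mul_self_nonneg (x j)) (mem_univ i)).trans hx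

theorem ne_zero_of_sum_mul_self_ne_zero {R : Type*} [NonUnitalNonAssocSemiring R] {x : ι → R}
    (hx : ∑ i, x i * x i ≠ 0) : x ≠ 0 := by
  rintro rfl
  simp at hx

theorem norm_sum_mul_mul_le {R : Type*} [NonUnitalSeminormedRing R] (s : Finset (ι × κ))
    (b : ι → κ → R) (u : ι → R) (v : κ → R) :
    ‖∑ p ∈ s, b p.1 p.2 * u p.1 * v p.2‖ ≤ (∑ p ∈ s, ‖b p.1 p.2‖) * (‖u‖ * ‖v‖) := by
  rw [sum_mul]
  refine norm_sum_le_of_le s fun p _ => ?_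
  calc ‖b p.1 p.2 * u p.1 * v p.2‖
      ≤ ‖b p.1 p.2‖ * ‖u p.1‖ * ‖v p.2‖ := norm_mul₃_le
    _ ≤ ‖b p.1 p.2‖ * ‖u‖ * ‖v‖ := by gcongr <;> exact norm_le_pi_norm _ _
    _ = ‖b p.1 p.2‖ * (‖u‖ * ‖v‖) := mul_assoc _ _ _

end SupNorm

section Eigenvector

variable {ι κ R : Type*} [Fintype κ] [NormedRing R] [NormMulClass R]
  {a : ι → κ → κ → R} {lam : R} {x : ι → R} {y : κ → R}

theorem norm_mul_norm_left_le {i : ι} (hi : ∑ j, ∑ k, a i j k * y j * y k = lam * x i)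
    (hy : ‖y‖ ≤ 1) : ‖lam‖ * ‖x i‖ ≤ (∑ l, ∑ k, ‖a i l k‖) * ‖y‖ := by
  rw [← norm_mul, ← hi, ← Fintype.sum_prod_type', ← Fintype.sum_prod_type']
  refine (norm_sum_mul_mul_le univ (a i) y y).trans ?_
  gcongr
  exact mul_le_of_le_one_left (norm_nonneg y) hy

variable [Fintype ι] [DecidableEq ι] [DecidableEq κ]

theorem norm_mul_norm_right_le {j : κ}
    (hj : ∑ l, ∑ k, a l k j * x l * y k = lam * y j) (hx : ‖x‖ ≤ 1) (hy : ‖y‖ ≤ 1)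
    (Δ : Finset (ι × κ)) :
    ‖lam‖ * ‖y j‖ ≤
      (∑ p ∈ Δ, ‖a p.1 p.2 j‖) * ‖y‖ + (∑ p ∈ Δᶜ, ‖a p.1 p.2 j‖) * ‖x‖ := by
  rw [← norm_mul, ← hj, ← Fintype.sum_prod_type', ← sum_add_sum_compl Δ]
  refine norm_add_le_of_le ((norm_sum_mul_mul_le Δ (a · · j) x y).trans ?_)
    ((norm_sum_mul_mul_le Δᶜ (a · · j) x y).trans ?_)
  · gcongr
    exact mul_le_of_le_one_left (norm_nonneg y) hx
  · gcongr
    exact mul_le_of_le_one_right (norm_nonneg x) hy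

theorem stmt10_general [Nonempty ι]
    (hleft : ∀ i, ∑ j, ∑ k, a i j k * y j * y k = lam * x i)
    (hright : ∀ j, ∑ l, ∑ k, a l k j * x l * y k = lam * y j)
    (hx : ‖x‖ ≤ 1) (hy : ‖y‖ ≤ 1) (hy0 : y ≠ 0) (Δ : Finset (ι × κ)) :
    ∃ i j, ‖lam‖ ≤ (1 / 2) * (∑ p ∈ Δ, ‖a p.1 p.2 j‖ + √((∑ p ∈ Δ, ‖a p.1 p.2 j‖) ^ 2 +
      4 * ((∑ l, ∑ k, ‖a i l k‖) * ∑ p ∈ Δᶜ, ‖a p.1 p.2 j‖))) := by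
  have : Nonempty κ := (Function.ne_iff.1 hy0).nonempty
  obtain ⟨i, hi⟩ := exists_norm_apply_eq_pi_norm x
  obtain ⟨j, hj⟩ := exists_norm_apply_eq_pi_norm y
  refine ⟨i, j, le_half_add_sqrt_of_sq_le ?_⟩
  have left_le := norm_mul_norm_left_le (hleft i) hy
  have right_le := norm_mul_norm_right_le (hright j) hx hy Δ
  rw [hi] at left_le
  rw [hj] at right_le
  set r₁ := ∑ l, ∑ k, ‖a i l k‖
  set rΔ := ∑ p ∈ Δ, ‖a p.1 p.2 j‖
  set rΔc := ∑ p ∈ Δᶜ, ‖a p.1 p.2 j‖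
  refine le_of_mul_le_mul_right ?_ (norm_pos_iff.2 hy0)
  calc ‖lam‖ ^ 2 * ‖y‖
      = ‖lam‖ * (‖lam‖ * ‖y‖) := by ring
    _ ≤ ‖lam‖ * (rΔ * ‖y‖ + rΔc * ‖x‖) := by gcongr
    _ = rΔ * ‖lam‖ * ‖y‖ + rΔc * (‖lam‖ * ‖x‖) := by ring
    _ ≤ rΔ * ‖lam‖ * ‖y‖ + rΔc * (r₁ * ‖y‖) := by gcongr
    _ = (rΔ * ‖lam‖ + r₁ * rΔc) * ‖y‖ := by ring

end Eigenvector

section PairsMeeting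

variable {n : ℕ} (a : Fin n → Fin n → Fin n → ℝ) (S : Finset (Fin n))

/-- The set `Δ_S` of index pairs with at least one entry in `S`; its complement is `Δ̄_S`. -/
def pairsMeeting : Finset (Fin n × Fin n) :=
  {p | p.1 ∈ S ∨ p.2 ∈ S}

theorem R3D_eq_sum_pairsMeeting (j : Fin n) :
    R3D a S j = ∑ p ∈ pairsMeeting S, |a p.1 p.2 j| := by
  rw [R3D, pairsMeeting, sum_filter, Fintype.sum_prod_type]

theorem R3Dbar_eq_sum_compl_pairsMeeting (j : Fin n) :
    R3Dbar a S j = ∑ p ∈ (pairsMeeting S)ᶜ, |a p.1 p.2 j| := by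
  simp only [R3Dbar, pairsMeeting, compl_filter, not_or, sum_filter, Fintype.sum_prod_type]

theorem le_rhoS (hn : 0 < n) (i j : Fin n) :
    (1 / 2) * (∑ p ∈ pairsMeeting S, |a p.1 p.2 j| +
      √((∑ p ∈ pairsMeeting S, |a p.1 p.2 j|) ^ 2 +
        4 * (R1 a i * ∑ p ∈ (pairsMeeting S)ᶜ, |a p.1 p.2 j|))) ≤ rhoS hn a S := by
  rw [← R3D_eq_sum_pairsMeeting, ← R3Dbar_eq_sum_compl_pairsMeeting, ← mul_assoc 4]
  exact le_sup' (fun p : Fin n × Fin n => (1 / 2) * (R3D a S p.2 +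
    √(R3D a S p.2 ^ 2 + 4 * R1 a p.1 * R3Dbar a S p.2))) (mem_univ (i, j))

end PairsMeeting

/-- Theorem 2.2 (first part): every C-eigenvalue `λ` satisfies `-ρ_S ≤ λ ≤ ρ_S`
for every subset `S` of `N`. -/
theorem stmt10 {n : ℕ} (hn : 0 < n) (a : Fin n → Fin n → Fin n → ℝ)
    (hA : ∀ i j k, a i j k = a i k j)
    (lam : ℝ) (x y : Fin n → ℝ) (h : CEig a lam x y)
    (S : Finset (Fin n)) :
    -(rhoS hn a S) ≤ lam ∧ lam ≤ rhoS hn a S := by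
  have : NeZero n := ⟨hn.ne'⟩
  obtain ⟨hleft, hright, hx, hy⟩ := h
  obtain ⟨i, j, hij⟩ := stmt10_general hleft hright
    (pi_norm_le_one_of_sum_mul_self_le_one hx.le) (pi_norm_le_one_of_sum_mul_self_le_one hy.le)
    (ne_zero_of_sum_mul_self_ne_zero (hy ▸ one_ne_zero)) (pairsMeeting S)
  exact abs_le.1 (hij.trans (le_rhoS a S hn i j))
end

section
/- (Theorem 2.3) Let A = (a_{ijk}) ∈ ℝ^{n×n×n} (n ≥ 1) be a piezoelectric-type tensor. Then ρ_min ≤ ρ, where ρ := max_{i,j∈N} (R_i^{(1)}(A) · R_j^{(3)}(A))^{1/2} and ρ_min := min_{S⊆N} ρ_S; consequently [−ρ_min, ρ_min] ⊆ [−ρ, ρ], and every C-eigenvalue λ of A lies in [−ρ_min, ρ_min]. -/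
open Finset

/-- `ρ_min = min_{S ⊆ N} ρ_S`. -/
noncomputable def rhoMin {n : ℕ} (hn : 0 < n) (a : Fin n → Fin n → Fin n → ℝ) : ℝ :=
  Finset.univ.inf' (Finset.univ_nonempty_iff.mpr ⟨(∅ : Finset (Fin n))⟩) (rhoS hn a)

/-!
Let `x`, `y` be C-eigenvectors of `λ`, and choose `i` and `j` maximising `|x i|` and `|y j|`.
The first eigenvalue equation in row `i` gives `|λ| |x i| ≤ R_i^{(1)}`. In the second one in row
`j`, bound `|y k|` by `|y j|`, which cancels, and `|x l|` by `1` on `Δ_S` and by `|x i|` on its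
complement: `|λ| ≤ R_j^{Δ_S,(3)} + |x i| R_j^{Δ̄_S,(3)}`. Multiplying by `|λ|` eliminates `|x i|`
and leaves a quadratic inequality for `|λ|`, whose larger root is the `(i, j)` entry of `ρ_S`.
The comparison of `ρ_min` with `ρ` is the choice `S = ∅`, for which `ρ_S = ρ`.
-/

section RealInequalities

variable {ι κ R : Type*} [CommRing R] [LinearOrder R] [IsStrictOrderedRing R]

lemma abs_le_one_of_sum_mul_self_le_one {s : Finset ι} {x : ι → R}
    (hx : ∑ i ∈ s, x i * x i ≤ 1) {i : ι} (hi : i ∈ s) : |x i| ≤ 1 :=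
  abs_le_one_iff_mul_self_le_one.mpr <|
    (single_le_sum (f := fun i ↦ x i * x i) (fun i _ ↦ mul_self_nonneg (x i)) hi).trans hx

lemma abs_sum_sum_mul_mul_le {s : Finset ι} {t : Finset κ} (m : ι → κ → R) {u : ι → R} {v : κ → R}
    {w : ι → κ → R} (h : ∀ j ∈ s, ∀ k ∈ t, |u j| * |v k| ≤ w j k) :
    |∑ j ∈ s, ∑ k ∈ t, m j k * u j * v k| ≤ ∑ j ∈ s, ∑ k ∈ t, |m j k| * w j k := by
  refine (abs_sum_le_sum_abs _ _).trans <| sum_le_sum fun j hj ↦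
    (abs_sum_le_sum_abs _ _).trans <| sum_le_sum fun k hk ↦ ?_
  calc |m j k * u j * v k| = |m j k| * (|u j| * |v k|) := by rw [abs_mul, abs_mul, mul_assoc]
    _ ≤ |m j k| * w j k := mul_le_mul_of_nonneg_left (h j hj k hk) (abs_nonneg _)

lemma le_half_mul_add_sqrt_of_sq_le {t b c : ℝ} (h : t ^ 2 ≤ b * t + c) :
    t ≤ 1 / 2 * (b + √(b ^ 2 + 4 * c)) := by
  have hsqrt : 2 * t - b ≤ √(b ^ 2 + 4 * c) := Real.le_sqrt_of_sq_le (by linear_combination 4 * h)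
  linear_combination hsqrt / 2

end RealInequalities

section

variable {n : ℕ} (a : Fin n → Fin n → Fin n → ℝ) (S : Finset (Fin n)) (j : Fin n)

lemma R3Dbar_nonneg : 0 ≤ R3Dbar a S j :=
  sum_nonneg fun _ _ ↦ sum_nonneg fun _ _ ↦ ite_nonneg (abs_nonneg _) le_rfl

lemma R3D_empty : R3D a ∅ j = 0 := by
  simp [R3D]

lemma R3Dbar_empty : R3Dbar a ∅ j = R3 a j := by
  simp [R3Dbar, R3]

lemma sum_sum_abs_mul_ite_eq_R3D_add (p : ℝ) :
    ∑ l, ∑ k, |a l k j| * (if l ∈ S ∨ k ∈ S then 1 else p) = R3D a S j + p * R3Dbar a S j := by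
  simp only [R3D, R3Dbar, mul_sum, ← sum_add_distrib, ← not_or, mul_ite, ite_not]
  refine sum_congr rfl fun l _ ↦ sum_congr rfl fun k _ ↦ ?_
  split_ifs <;> ring

lemma rhoS_empty (hn : 0 < n) : rhoS hn a ∅ = rho hn a := by
  refine sup'_congr _ rfl fun p _ ↦ ?_
  have hsqrt : √(4 * R1 a p.1 * R3 a p.2) = 2 * √(R1 a p.1 * R3 a p.2) := by
    rw [mul_assoc, Real.sqrt_mul (by norm_num), show (4 : ℝ) = 2 ^ 2 by norm_num,
      Real.sqrt_sq zero_le_two]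
  rw [R3D_empty, R3Dbar_empty, zero_pow two_ne_zero, zero_add, zero_add, hsqrt]
  ring

lemma rhoMin_le_rhoS (hn : 0 < n) : rhoMin hn a ≤ rhoS hn a S :=
  inf'_le _ (mem_univ S)

lemma rhoMin_le_rho (hn : 0 < n) : rhoMin hn a ≤ rho hn a :=
  (rhoMin_le_rhoS a ∅ hn).trans_eq (rhoS_empty a hn)

end

namespace CEig

variable {n : ℕ} {a : Fin n → Fin n → Fin n → ℝ} {lam : ℝ} {x y : Fin n → ℝ}

lemma abs_left_le_one (h : CEig a lam x y) (i : Fin n) : |x i| ≤ 1 :=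
  abs_le_one_of_sum_mul_self_le_one h.2.2.1.le (mem_univ i)

lemma abs_right_le_one (h : CEig a lam x y) (j : Fin n) : |y j| ≤ 1 :=
  abs_le_one_of_sum_mul_self_le_one h.2.2.2.le (mem_univ j)

lemma exists_right_ne_zero (h : CEig a lam x y) : ∃ j, y j ≠ 0 := by
  by_contra! hy
  simpa [hy] using h.2.2.2

lemma abs_mul_abs_left_le_R1 (h : CEig a lam x y) (i : Fin n) : |lam| * |x i| ≤ R1 a i := by
  calc |lam| * |x i| = |∑ l, ∑ k, a i l k * y l * y k| := by rw [h.1 i, abs_mul]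
    _ ≤ ∑ l, ∑ k, |a i l k| * 1 := abs_sum_sum_mul_mul_le (a i) fun l _ k _ ↦
        mul_le_one₀ (h.abs_right_le_one l) (abs_nonneg _) (h.abs_right_le_one k)
    _ = R1 a i := by simp only [mul_one, R1]

lemma abs_mul_abs_right_le (h : CEig a lam x y) (S : Finset (Fin n)) {p q : ℝ}
    (hx : ∀ l, |x l| ≤ p) (hy : ∀ k, |y k| ≤ q) (j : Fin n) :
    |lam| * |y j| ≤ (R3D a S j + p * R3Dbar a S j) * q := by
  have hweight (l k : Fin n) : |x l| * |y k| ≤ (if l ∈ S ∨ k ∈ S then 1 else p) * q := by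
    have hxl : |x l| ≤ if l ∈ S ∨ k ∈ S then 1 else p := by
      split_ifs
      exacts [h.abs_left_le_one l, hx l]
    exact mul_le_mul hxl (hy k) (abs_nonneg _) ((abs_nonneg _).trans hxl)
  calc |lam| * |y j| = |∑ l, ∑ k, a l k j * x l * y k| := by rw [h.2.1 j, abs_mul]
    _ ≤ ∑ l, ∑ k, |a l k j| * ((if l ∈ S ∨ k ∈ S then 1 else p) * q) :=
        abs_sum_sum_mul_mul_le (fun l k ↦ a l k j) fun l _ k _ ↦ hweight l k
    _ = (R3D a S j + p * R3Dbar a S j) * q := by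
        simp only [← sum_sum_abs_mul_ite_eq_R3D_add, sum_mul, mul_assoc]

lemma exists_abs_le_R3D_add (h : CEig a lam x y) (S : Finset (Fin n)) :
    ∃ i j, |lam| ≤ R3D a S j + |x i| * R3Dbar a S j := by
  obtain ⟨k, hk⟩ := h.exists_right_ne_zero
  have : Nonempty (Fin n) := ⟨k⟩
  obtain ⟨i, hi⟩ := Finite.exists_max fun i ↦ |x i|
  obtain ⟨j, hj⟩ := Finite.exists_max fun j ↦ |y j|
  have hyj : 0 < |y j| := (abs_pos.mpr hk).trans_le (hj k)
  exact ⟨i, j, le_of_mul_le_mul_right (h.abs_mul_abs_right_le S hi hj j) hyj⟩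

lemma exists_sq_abs_le_R3D_mul_add (h : CEig a lam x y) (S : Finset (Fin n)) :
    ∃ i j, |lam| ^ 2 ≤ R3D a S j * |lam| + R1 a i * R3Dbar a S j := by
  obtain ⟨i, j, hij⟩ := h.exists_abs_le_R3D_add S
  refine ⟨i, j, ?_⟩
  calc |lam| ^ 2 = |lam| * |lam| := sq _
    _ ≤ (R3D a S j + |x i| * R3Dbar a S j) * |lam| :=
        mul_le_mul_of_nonneg_right hij (abs_nonneg _)
    _ = R3D a S j * |lam| + |lam| * |x i| * R3Dbar a S j := by ring
    _ ≤ R3D a S j * |lam| + R1 a i * R3Dbar a S j :=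
        add_le_add_right (mul_le_mul_of_nonneg_right (h.abs_mul_abs_left_le_R1 i)
          (R3Dbar_nonneg a S j)) _

lemma abs_le_rhoS (h : CEig a lam x y) (hn : 0 < n) (S : Finset (Fin n)) :
    |lam| ≤ rhoS hn a S := by
  obtain ⟨i, j, hij⟩ := h.exists_sq_abs_le_R3D_mul_add S
  refine le_sup'_of_le _ (mem_univ (i, j)) ?_
  simpa only [mul_assoc] using le_half_mul_add_sqrt_of_sq_le hij

lemma abs_le_rhoMin (h : CEig a lam x y) (hn : 0 < n) : |lam| ≤ rhoMin hn a :=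
  le_inf' _ _ fun S _ ↦ h.abs_le_rhoS hn S

end CEig

theorem stmt16_general {n : ℕ} (hn : 0 < n) (a : Fin n → Fin n → Fin n → ℝ) :
    rhoMin hn a ≤ rho hn a ∧
    Set.Icc (-(rhoMin hn a)) (rhoMin hn a) ⊆ Set.Icc (-(rho hn a)) (rho hn a) ∧
    ∀ (lam : ℝ) (x y : Fin n → ℝ), CEig a lam x y →
      lam ∈ Set.Icc (-(rhoMin hn a)) (rhoMin hn a) := by
  have hle : rhoMin hn a ≤ rho hn a := rhoMin_le_rho a hn
  exact ⟨hle, Set.Icc_subset_Icc (neg_le_neg hle) hle, fun _ _ _ h ↦ abs_le.mp (h.abs_le_rhoMin hn)⟩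

/-- Theorem 2.3: `ρ_min ≤ ρ`, hence `[-ρ_min, ρ_min] ⊆ [-ρ, ρ]`, and every C-eigenvalue
lies in `[-ρ_min, ρ_min]`. -/
theorem stmt16 {n : ℕ} (hn : 0 < n) (a : Fin n → Fin n → Fin n → ℝ)
    (hA : ∀ i j k, a i j k = a i k j) :
    rhoMin hn a ≤ rho hn a ∧
    Set.Icc (-(rhoMin hn a)) (rhoMin hn a) ⊆ Set.Icc (-(rho hn a)) (rho hn a) ∧
    ∀ (lam : ℝ) (x y : Fin n → ℝ), CEig a lam x y →
      lam ∈ Set.Icc (-(rhoMin hn a)) (rhoMin hn a) :=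
  stmt16_general hn a
end
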